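/- Suppose 2 ≤ k ≤ n are integers such that n is odd or n − k > 2, and f : V(C_n) → {1,...,k} is a k-color weak maximizer of the Wiener index W on C_n. Then W(f) = max{ W(f') : f' a k-color weak maximizer of W on C_n } if and only if f has a color class of the largest possible size n − (k − 1). -/

import Mathlib

open SimpleGraph Finset

/-- The cycle graph on vertex set `ZMod n`, with an edge between `i` and `i+1` (mod `n`). -/
def cycleGraphZMod (n : ℕ) : SimpleGraph (ZMod n) :=
  SimpleGraph.fromRel (fun u v => v = u + 1)

/-- The Wiener index of a set of vertices: the sum of all pairwise geodesic distances. -/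
noncomputable def wienerSet {V : Type*} [Fintype V] [DecidableEq V]
    (G : SimpleGraph V) (A : Finset V) : ℕ :=
  (∑ p ∈ A.offDiag, G.dist p.1 p.2) / 2

/-- `A` is a maximizer of `W` on `G`. -/
def IsWienerMaximizer {V : Type*} [Fintype V] [DecidableEq V]
    (G : SimpleGraph V) (A : Finset V) : Prop :=
  ∀ B : Finset V, B.card = A.card → wienerSet G B ≤ wienerSet G A

/-- `A ⊆ V(C_n)` is almost good. -/
def AlmostGood (n : ℕ) (A : Finset (ZMod n)) : Prop :=
  A.card = 1 ∨ A.card = n - 1 ∨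
    ∃ c₁ c₂ : ((cycleGraphZMod n).induce (↑A : Set (ZMod n))).ConnectedComponent,
      c₁ ≠ c₂ ∧ (∀ c, c = c₁ ∨ c = c₂) ∧
      (c₁.supp.ncard : ℤ) - (c₂.supp.ncard : ℤ) ≤ 1 ∧
      (c₂.supp.ncard : ℤ) - (c₁.supp.ncard : ℤ) ≤ 1

/-- `A ⊆ V(C_n)` is good: both `A` and its complement are almost good. -/
def GoodSet (n : ℕ) [NeZero n] (A : Finset (ZMod n)) : Prop :=
  AlmostGood n A ∧ AlmostGood n (Finset.univ \ A)

/-- The color class of color `i` for the coloring `f`. -/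
def colorClass {V : Type*} [Fintype V] {k : ℕ} (f : V → Fin k) (i : Fin k) : Finset V :=
  Finset.univ.filter (fun v => f v = i)

/-- The Wiener index of a coloring: the sum of the Wiener indices of its color classes. -/
noncomputable def wienerColoring {V : Type*} [Fintype V] [DecidableEq V] {k : ℕ}
    (G : SimpleGraph V) (f : V → Fin k) : ℕ :=
  ∑ i : Fin k, wienerSet G (colorClass f i)

/-- The type of a coloring, as the multiset of cardinalities of its color classes
(equality of multisets is equality of the nondecreasing rearrangements). -/
def colorType {V : Type*} [Fintype V] {k : ℕ} (f : V → Fin k) : Multiset ℕ :=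
  (Finset.univ : Finset (Fin k)).val.map (fun i => (colorClass f i).card)

/-- `f` is a `k`-color weak maximizer of `W` on `G`. -/
def IsWeakMaximizer {V : Type*} [Fintype V] [DecidableEq V] {k : ℕ}
    (G : SimpleGraph V) (f : V → Fin k) : Prop :=
  Function.Surjective f ∧ ∀ g : V → Fin k, Function.Surjective g →
    colorType g = colorType f → wienerColoring G g ≤ wienerColoring G f

/-- The coloring obtained from `f` by swapping the colors of `u` and `v`. -/
def swapColors {V α : Type*} [DecidableEq V] (f : V → α) (u v : V) : V → α :=
  f ∘ Equiv.swap u v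

/-- `f` is a `k`-color local weak maximizer of `W` on `G`. -/
def IsLocalWeakMaximizer {V : Type*} [Fintype V] [DecidableEq V] {k : ℕ}
    (G : SimpleGraph V) (f : V → Fin k) : Prop :=
  Function.Surjective f ∧ ∀ u v : V, G.Adj u v →
    wienerColoring G (swapColors f u v) ≤ wienerColoring G f

/-- The number of vertices to the left of `u` in the path that get the same color as `u`. -/
def leftCount {n k : ℕ} (f : Fin n → Fin k) (u : Fin n) : ℕ :=
  (Finset.univ.filter (fun w => w < u ∧ f w = f u)).card

/-- The number of vertices to the right of `u` in the path that get the same color as `u`. -/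
def rightCount {n k : ℕ} (f : Fin n → Fin k) (u : Fin n) : ℕ :=
  (Finset.univ.filter (fun w => u < w ∧ f w = f u)).card

/-- The sum of the `j` largest entries of a multiset of naturals. -/
def sumLargest (s : Multiset ℕ) (j : ℕ) : ℕ :=
  (((s.sort (· ≤ ·)).reverse).take j).sum

/-- `x ≺ y` : `x` is majorized by `y`. -/
def MajorizedBy (x y : Multiset ℕ) : Prop :=
  x.card = y.card ∧ x.sum = y.sum ∧ ∀ j, sumLargest x j ≤ sumLargest y j

/-- The reverse Robin Hood transfer `R_{j,j'}` applied to the (sorted) list `t`,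
with `j ≤ j'` zero-indexed: subtract `1` from the `j`-th entry and add `1` to the `j'`-th
entry; the result is recorded as a multiset (i.e. up to rearrangement). -/
def rhTransfer (t : List ℕ) (j j' : ℕ) : Multiset ℕ :=
  ↑((t.set j (t.getD j 0 - 1)).set j' ((t.set j (t.getD j 0 - 1)).getD j' 0 + 1))

/-- `t(n,k)` : the unique nondecreasing `k`-tuple of positive integers summing to `n`
whose entries pairwise differ by at most one, as a multiset. -/
def equitableType (n k : ℕ) : Multiset ℕ :=
  Multiset.replicate (k - n % k) (n / k) + Multiset.replicate (n % k) (n / k + 1)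

/-- One step of the operation `R`: `s ∈ R({t})`, i.e. `s = t` or `s` is obtained from `t` by
a reverse Robin Hood transfer between two entries that are equal and even. -/
def REstep (t s : Multiset ℕ) : Prop :=
  s = t ∨ ∃ m : ℕ, Even m ∧ 2 ≤ t.count m ∧
    s = (t - Multiset.replicate 2 m) + {m - 1, m + 1}

/-- `s ∈ R^∞({t(n,k)})`. -/
def InRInfty (n k : ℕ) (s : Multiset ℕ) : Prop :=
  Relation.ReflTransGen REstep (equitableType n k) s

/-!
If two color classes `A` and `B` both have at least two vertices, let one vertex `x ∈ A` keep its
color and give the color of `B` to the rest of `A`. This changes `W` by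
`d(A, B) - d(x, A) - d(x, B)`, which sums to `(|A| - 1) d(A, B) - 2 W(A)` over `x ∈ A`. Summing the
triangle inequality through a vertex of `B` over all pairs in `A` and all vertices of `B` gives
`|B| W(A) ≤ (|A| - 1) d(A, B)`, so some choice of `x` does not decrease `W`, and some choice
increases it if `|B| ≥ 3`. Hence in a coloring of maximal Wiener index any two classes that are not
singletons are pairs. If there is a third such class, the move yields a maximal coloring with a
class of size three next to a pair, which is impossible; and two pairs alone are improved by the
move as soon as `d(a, b) + d(c, d) < d(a, c) + d(a, d) + d(b, c) + d(b, d)` always holds, as it does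
on odd cycles, where no two points strictly between `a` and `b` are at distance `d(a, b)`.
-/

section SumDist

variable {V : Type*} (G : SimpleGraph V)

/-- The sum of the distances from the elements of `A` to those of `B`; a distance within `A ∩ B` is
counted in both directions. -/
noncomputable def sumDist (A B : Finset V) : ℕ := ∑ x ∈ A, ∑ y ∈ B, G.dist x y

lemma sumDist_comm (A B : Finset V) : sumDist G A B = sumDist G B A := by
  simp only [sumDist, Finset.sum_comm (s := A), G.dist_comm]

lemma sumDist_insert_left [DecidableEq V] {x : V} {A : Finset V} (hx : x ∉ A) (B : Finset V) :
    sumDist G (insert x A) B = ∑ y ∈ B, G.dist x y + sumDist G A B :=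
  Finset.sum_insert hx

lemma sumDist_insert_right [DecidableEq V] (A : Finset V) {x : V} {B : Finset V} (hx : x ∉ B) :
    sumDist G A (insert x B) = ∑ y ∈ A, G.dist x y + sumDist G A B := by
  rw [sumDist_comm, sumDist_insert_left G hx, sumDist_comm]

end SumDist

section WienerSet

variable {V : Type*} [Fintype V] [DecidableEq V] (G : SimpleGraph V)

lemma wienerSet_eq_sumDist_div_two (A : Finset V) : wienerSet G A = sumDist G A A / 2 := by
  have hdiag : sumDist G A A = ∑ p ∈ A.offDiag, G.dist p.1 p.2 := by
    rw [sumDist, ← Finset.sum_product', ← Finset.diag_union_offDiag,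
      Finset.sum_union (Finset.disjoint_diag_offDiag A), Finset.sum_diag]
    simp only [SimpleGraph.dist_self, Finset.sum_const_zero, zero_add]
  rw [wienerSet, hdiag]

@[simp]
lemma wienerSet_empty : wienerSet G ∅ = 0 := by
  simp [wienerSet]

@[simp]
lemma wienerSet_singleton (x : V) : wienerSet G {x} = 0 := by
  simp [wienerSet]

lemma wienerSet_insert {x : V} {A : Finset V} (hx : x ∉ A) :
    wienerSet G (insert x A) = wienerSet G A + ∑ y ∈ A, G.dist x y := by
  rw [wienerSet_eq_sumDist_div_two, wienerSet_eq_sumDist_div_two, sumDist_insert_left G hx,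
    sumDist_insert_right G A hx, Finset.sum_insert hx, G.dist_self]
  omega

lemma wienerSet_pair {x y : V} (hxy : x ≠ y) : wienerSet G {x, y} = G.dist x y := by
  rw [wienerSet_insert G (Finset.notMem_singleton.mpr hxy), wienerSet_singleton, zero_add,
    Finset.sum_singleton]

lemma wienerSet_erase_add {x : V} {A : Finset V} (hx : x ∈ A) :
    wienerSet G (A.erase x) + ∑ y ∈ A, G.dist x y = wienerSet G A := by
  conv_rhs => rw [← Finset.insert_erase hx, wienerSet_insert G (Finset.notMem_erase x A)]
  rw [← Finset.add_sum_erase A _ hx, G.dist_self, zero_add]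

lemma sumDist_self (A : Finset V) : sumDist G A A = 2 * wienerSet G A := by
  induction A using Finset.induction_on with
  | empty => simp [sumDist]
  | insert x A hx ih =>
    rw [sumDist_insert_left G hx, sumDist_insert_right G A hx, Finset.sum_insert hx, G.dist_self,
      ih, wienerSet_insert G hx]
    ring

lemma sum_sum_dist_add_sum_dist (A B : Finset V) :
    ∑ x ∈ A, (∑ y ∈ A, G.dist x y + ∑ y ∈ B, G.dist x y) = 2 * wienerSet G A + sumDist G A B := by
  rw [Finset.sum_add_distrib, ← sumDist_self, sumDist, sumDist]

lemma wienerSet_union {A B : Finset V} (h : Disjoint A B) :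
    wienerSet G (A ∪ B) = wienerSet G A + wienerSet G B + sumDist G A B := by
  induction A using Finset.induction_on with
  | empty => simp [sumDist]
  | insert x A hx ih =>
    obtain ⟨hxB, hAB⟩ := Finset.disjoint_insert_left.mp h
    rw [Finset.insert_union, wienerSet_insert G (Finset.notMem_union.mpr ⟨hx, hxB⟩), ih hAB,
      Finset.sum_union hAB, wienerSet_insert G hx, sumDist_insert_left G hx]
    ring

variable {G}

lemma wienerSet_pos (hG : G.Connected) {A : Finset V} (hA : 2 ≤ #A) : 0 < wienerSet G A := by
  obtain ⟨x, hx, y, hy, hxy⟩ := Finset.one_lt_card.mp hA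
  rw [← wienerSet_erase_add G hx]
  exact Nat.add_pos_right _
    ((hG.pos_dist_of_ne hxy).trans_le
      (Finset.single_le_sum_of_canonicallyOrdered (f := G.dist x) hy))

lemma wienerSet_add_sum_dist_le (hG : G.Connected) (A : Finset V) (z : V) :
    wienerSet G A + ∑ y ∈ A, G.dist z y ≤ #A * ∑ y ∈ A, G.dist z y := by
  induction A using Finset.induction_on with
  | empty => simp
  | insert x A hx ih =>
    have hdetour : ∑ y ∈ A, G.dist x y ≤ #A * G.dist z x + ∑ y ∈ A, G.dist z y :=
      calc ∑ y ∈ A, G.dist x y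
        _ ≤ ∑ y ∈ A, (G.dist z x + G.dist z y) :=
          Finset.sum_le_sum fun y _ => G.dist_comm (u := z) (v := x) ▸ hG.dist_triangle
        _ = #A * G.dist z x + ∑ y ∈ A, G.dist z y := by
          rw [Finset.sum_add_distrib, Finset.sum_const, smul_eq_mul]
    rw [wienerSet_insert G hx, Finset.sum_insert hx, Finset.card_insert_of_notMem hx]
    linarith

lemma card_mul_wienerSet_add_sumDist_le (hG : G.Connected) (A B : Finset V) :
    #B * wienerSet G A + sumDist G A B ≤ #A * sumDist G A B := by
  rw [sumDist_comm]
  calc #B * wienerSet G A + sumDist G B A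
    _ = ∑ z ∈ B, (wienerSet G A + ∑ y ∈ A, G.dist z y) := by
      rw [Finset.sum_add_distrib, Finset.sum_const, smul_eq_mul, sumDist]
    _ ≤ ∑ z ∈ B, #A * ∑ y ∈ A, G.dist z y :=
      Finset.sum_le_sum fun z _ => wienerSet_add_sum_dist_le hG A z
    _ = #A * sumDist G B A := by rw [← Finset.mul_sum, sumDist]

end WienerSet

section StrictFourPoint

variable {V : Type*}

/-- The two distances within disjoint pairs `{a, b}` and `{c, d}` sum to less than the four
distances across. The weak inequality holds in every connected graph; equality occurs for two
antipodal pairs of an even cycle. -/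
def StrictFourPoint (G : SimpleGraph V) : Prop :=
  ∀ ⦃a b c d : V⦄, a ≠ c → a ≠ d → b ≠ c → b ≠ d →
    G.dist a b + G.dist c d < G.dist a c + G.dist a d + G.dist b c + G.dist b d

lemma strictFourPoint_of_dist_lt_of_between {G : SimpleGraph V} (hG : G.Connected)
    (h : ∀ a b c d, a ≠ c → a ≠ d → G.dist a c + G.dist c b = G.dist a b →
      G.dist a d + G.dist d b = G.dist a b → G.dist c d < G.dist a b) :
    StrictFourPoint G := by
  intro a b c d hac had hbc _
  by_contra! hle
  have hacb : G.dist a b ≤ G.dist a c + G.dist c b := hG.dist_triangle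
  have hadb : G.dist a b ≤ G.dist a d + G.dist d b := hG.dist_triangle
  have hcad : G.dist c d ≤ G.dist c a + G.dist a d := hG.dist_triangle
  have hcbd : G.dist c d ≤ G.dist c b + G.dist b d := hG.dist_triangle
  rw [G.dist_comm (u := c) (v := a)] at hcad
  rw [G.dist_comm (u := c) (v := b)] at hacb hcbd
  rw [G.dist_comm (u := d) (v := b)] at hadb
  have hcd : G.dist c d < G.dist a b := h a b c d hac had
    (by rw [G.dist_comm (u := c) (v := b)]; omega) (by rw [G.dist_comm (u := d) (v := b)]; omega)
  have hab : G.dist a b < G.dist c d := h c d a b hac.symm hbc.symm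
    (by rw [G.dist_comm (u := c) (v := a)]; omega) (by rw [G.dist_comm (u := c) (v := b)]; omega)
  exact hcd.asymm hab

lemma StrictFourPoint.wienerSet_add_lt_sumDist [Fintype V] [DecidableEq V] {G : SimpleGraph V}
    (hG : StrictFourPoint G) {A B : Finset V} (h : Disjoint A B) (hA : #A = 2) (hB : #B = 2) :
    wienerSet G A + wienerSet G B < sumDist G A B := by
  obtain ⟨a, b, hab, rfl⟩ := Finset.card_eq_two.mp hA
  obtain ⟨c, d, hcd, rfl⟩ := Finset.card_eq_two.mp hB
  simp only [Finset.disjoint_insert_left, Finset.disjoint_singleton_left, Finset.mem_insert,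
    Finset.mem_singleton, not_or] at h
  have hlt := hG h.1.1 h.1.2 h.2.1 h.2.2
  rw [wienerSet_pair G hab, wienerSet_pair G hcd, sumDist, Finset.sum_pair hab,
    Finset.sum_pair hcd, Finset.sum_pair hcd]
  omega

end StrictFourPoint

section Coloring

variable {V : Type*} [Fintype V] {k : ℕ}

@[simp]
lemma mem_colorClass {f : V → Fin k} {i : Fin k} {v : V} : v ∈ colorClass f i ↔ f v = i := by
  simp [colorClass]

lemma disjoint_colorClass (f : V → Fin k) {i j : Fin k} (hij : i ≠ j) :
    Disjoint (colorClass f i) (colorClass f j) :=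
  Finset.disjoint_left.mpr fun _ hi hj =>
    hij ((mem_colorClass.mp hi).symm.trans (mem_colorClass.mp hj))

lemma card_colorClass_pos {f : V → Fin k} (hf : Function.Surjective f) (i : Fin k) :
    0 < #(colorClass f i) :=
  let ⟨v, hv⟩ := hf i
  Finset.card_pos.mpr ⟨v, mem_colorClass.mpr hv⟩

lemma sum_card_colorClass (f : V → Fin k) : ∑ i, #(colorClass f i) = Fintype.card V :=
  (Finset.card_eq_sum_card_fiberwise fun _ _ => Finset.mem_coe.mpr (Finset.mem_univ _)).symm

lemma card_colorClass_eq_iff {f : V → Fin k} (hf : Function.Surjective f) {i : Fin k} :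
    #(colorClass f i) = Fintype.card V - (k - 1) ↔ ∀ l ≠ i, #(colorClass f l) = 1 := by
  have hsum := Finset.add_sum_erase univ (fun l => #(colorClass f l)) (Finset.mem_univ i)
  rw [sum_card_colorClass] at hsum
  have hones : ∑ _l ∈ univ.erase i, 1 = k - 1 := by simp
  have hpos : ∀ l ∈ univ.erase i, 1 ≤ #(colorClass f l) := fun l _ => card_colorClass_pos hf l
  have hi := card_colorClass_pos hf i
  calc #(colorClass f i) = Fintype.card V - (k - 1)
    _ ↔ ∑ _l ∈ univ.erase i, 1 = ∑ l ∈ univ.erase i, #(colorClass f l) := by omega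
    _ ↔ ∀ l ≠ i, #(colorClass f l) = 1 := by
      rw [Finset.sum_eq_sum_iff_of_le hpos]
      simp [eq_comm]

lemma colorType_eq_of_card_colorClass {f : V → Fin k} (hf : Function.Surjective f) {i : Fin k}
    (hi : #(colorClass f i) = Fintype.card V - (k - 1)) :
    colorType f = (Fintype.card V - (k - 1)) ::ₘ Multiset.replicate (k - 1) 1 := by
  have hone := (card_colorClass_eq_iff hf).mp hi
  rw [colorType, ← Finset.insert_erase (Finset.mem_univ i),
    Finset.insert_val_of_notMem (Finset.notMem_erase _ _), Multiset.map_cons, hi,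
    Multiset.map_congr rfl fun l hl => hone l (Finset.ne_of_mem_erase hl), Multiset.map_const']
  simp

lemma exists_card_colorClass_eq_of_forall_eq [Nonempty V] {f : V → Fin k}
    (hf : Function.Surjective f)
    (h : ∀ i j, 2 ≤ #(colorClass f i) → 2 ≤ #(colorClass f j) → i = j) :
    ∃ i, #(colorClass f i) = Fintype.card V - (k - 1) := by
  simp only [card_colorClass_eq_iff hf]
  by_cases hbig : ∃ i, 2 ≤ #(colorClass f i)
  · obtain ⟨i, hi⟩ := hbig
    refine ⟨i, fun l hl => le_antisymm ?_ (card_colorClass_pos hf l)⟩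
    exact Nat.le_of_lt_succ (not_le.mp fun hl₂ => hl (h l i hl₂ hi))
  · refine ⟨f (Classical.arbitrary V), fun l _ => le_antisymm ?_ (card_colorClass_pos hf l)⟩
    exact Nat.le_of_lt_succ (not_le.mp fun hl₂ => hbig ⟨l, hl₂⟩)

lemma exists_third_colorClass {f : V → Fin k} {i j : Fin k} (hi : #(colorClass f i) = 2)
    (hj : #(colorClass f j) = 2) (hV : k + 2 < Fintype.card V) :
    ∃ l, l ≠ i ∧ l ≠ j ∧ 2 ≤ #(colorClass f l) := by
  have hlt : ∑ l, (1 + (if l = i then 1 else 0) + if l = j then 1 else 0) <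
      ∑ l, #(colorClass f l) := by
    simpa [sum_card_colorClass, Finset.sum_add_distrib, add_assoc] using hV
  obtain ⟨l, -, hl⟩ := Finset.exists_lt_of_sum_lt hlt
  grind

end Coloring

section MergeKeeping

variable {V : Type*} [DecidableEq V] {k : ℕ}

/-- The coloring obtained from `f` by giving color `j` to every vertex of the color class of `x`,
except to `x` itself. -/
def mergeKeeping (f : V → Fin k) (x : V) (j : Fin k) : V → Fin k :=
  fun v => if f v = f x ∧ v ≠ x then j else f v

lemma mergeKeeping_surjective {f : V → Fin k} (hf : Function.Surjective f) (x : V) (j : Fin k) :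
    Function.Surjective (mergeKeeping f x j) := by
  intro l
  by_cases hl : l = f x
  · exact ⟨x, by simp [mergeKeeping, hl]⟩
  · obtain ⟨v, rfl⟩ := hf l
    exact ⟨v, by simp [mergeKeeping, hl]⟩

variable [Fintype V] (f : V → Fin k) (x : V) {j : Fin k}

lemma colorClass_mergeKeeping_self (hj : f x ≠ j) :
    colorClass (mergeKeeping f x j) (f x) = {x} := by
  ext v
  simp only [mem_colorClass, mergeKeeping, Finset.mem_singleton]
  grind

lemma colorClass_mergeKeeping_target (hj : f x ≠ j) :
    colorClass (mergeKeeping f x j) j = (colorClass f (f x)).erase x ∪ colorClass f j := by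
  ext v
  simp only [mem_colorClass, mergeKeeping, Finset.mem_union, Finset.mem_erase]
  grind

lemma colorClass_mergeKeeping_of_ne {l : Fin k} (hl : l ≠ f x) (hlj : l ≠ j) :
    colorClass (mergeKeeping f x j) l = colorClass f l := by
  ext v
  simp only [mem_colorClass, mergeKeeping]
  grind

lemma card_colorClass_mergeKeeping_target (hj : f x ≠ j) :
    #(colorClass (mergeKeeping f x j) j) + 1 = #(colorClass f (f x)) + #(colorClass f j) := by
  have hx : x ∈ colorClass f (f x) := mem_colorClass.mpr rfl
  rw [colorClass_mergeKeeping_target f x hj, Finset.card_union_of_disjoint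
    ((disjoint_colorClass f hj).mono_left (Finset.erase_subset _ _)),
    ← Finset.card_erase_add_one hx]
  ring

lemma wienerColoring_mergeKeeping_add (G : SimpleGraph V) (hj : f x ≠ j) :
    wienerColoring G (mergeKeeping f x j) +
        (∑ y ∈ colorClass f (f x), G.dist x y + ∑ y ∈ colorClass f j, G.dist x y) =
      wienerColoring G f + sumDist G (colorClass f (f x)) (colorClass f j) := by
  have hsplit (g : V → Fin k) : wienerColoring G g =
      ∑ l ∈ univ \ {f x, j}, wienerSet G (colorClass g l) +
        (wienerSet G (colorClass g (f x)) + wienerSet G (colorClass g j)) := by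
    rw [wienerColoring, ← Finset.sum_sdiff (Finset.subset_univ {f x, j}), Finset.sum_pair hj]
  rw [hsplit, hsplit]
  set A := colorClass f (f x)
  set B := colorClass f j
  have hx : x ∈ A := mem_colorClass.mpr rfl
  have hrest : ∑ l ∈ univ \ {f x, j}, wienerSet G (colorClass (mergeKeeping f x j) l) =
      ∑ l ∈ univ \ {f x, j}, wienerSet G (colorClass f l) := by
    refine Finset.sum_congr rfl fun l hl => ?_
    simp only [Finset.mem_sdiff, Finset.mem_insert, Finset.mem_singleton, not_or] at hl
    rw [colorClass_mergeKeeping_of_ne f x hl.2.1 hl.2.2]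
  have htarget : wienerSet G (colorClass (mergeKeeping f x j) j) =
      wienerSet G (A.erase x) + wienerSet G B + sumDist G (A.erase x) B := by
    rw [colorClass_mergeKeeping_target f x hj, wienerSet_union G
      ((disjoint_colorClass f hj).mono_left (Finset.erase_subset _ _))]
  have hA : wienerSet G (A.erase x) + ∑ y ∈ A, G.dist x y = wienerSet G A :=
    wienerSet_erase_add G hx
  have hAB : ∑ y ∈ B, G.dist x y + sumDist G (A.erase x) B = sumDist G A B :=
    Finset.add_sum_erase A (fun x => ∑ y ∈ B, G.dist x y) hx
  rw [hrest, htarget, colorClass_mergeKeeping_self f x hj, wienerSet_singleton]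
  omega

variable {f} {G : SimpleGraph V}

lemma exists_wienerColoring_le_mergeKeeping (hG : G.Connected) (hf : Function.Surjective f)
    {i : Fin k} (hij : i ≠ j) (hj : 2 ≤ #(colorClass f j)) :
    ∃ x, f x = i ∧ wienerColoring G f ≤ wienerColoring G (mergeKeeping f x j) := by
  set A := colorClass f i
  set B := colorClass f j
  have hsum : ∑ x ∈ A, (∑ y ∈ A, G.dist x y + ∑ y ∈ B, G.dist x y) ≤ ∑ _x ∈ A, sumDist G A B :=
    calc ∑ x ∈ A, (∑ y ∈ A, G.dist x y + ∑ y ∈ B, G.dist x y)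
      _ = 2 * wienerSet G A + sumDist G A B := sum_sum_dist_add_sum_dist G A B
      _ ≤ #B * wienerSet G A + sumDist G A B := by gcongr
      _ ≤ #A * sumDist G A B := card_mul_wienerSet_add_sumDist_le hG A B
      _ = ∑ _x ∈ A, sumDist G A B := by rw [Finset.sum_const, smul_eq_mul]
  obtain ⟨x, hx, hle⟩ :=
    Finset.exists_le_of_sum_le (Finset.card_pos.mp (card_colorClass_pos hf i)) hsum
  obtain rfl := mem_colorClass.mp hx
  have hadd := wienerColoring_mergeKeeping_add f x G hij
  simp only [A, B] at hle
  exact ⟨x, rfl, by omega⟩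

end MergeKeeping

section ColorMaximizer

variable {V : Type*} [Fintype V] [DecidableEq V] {k : ℕ} {G : SimpleGraph V} {f : V → Fin k}

/-- `f` has maximal Wiener index among all colorings that use all `k` colors, whatever their
type. -/
def IsColorMaximizer (G : SimpleGraph V) (f : V → Fin k) : Prop :=
  Function.Surjective f ∧
    ∀ g : V → Fin k, Function.Surjective g → wienerColoring G g ≤ wienerColoring G f

lemma exists_isColorMaximizer (G : SimpleGraph V) (hf : Function.Surjective f) :
    ∃ m : V → Fin k, IsColorMaximizer G m :=
  Set.exists_max_image {g : V → Fin k | Function.Surjective g} (wienerColoring G)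
    (Set.toFinite _) ⟨f, hf⟩

namespace IsColorMaximizer

lemma isWeakMaximizer (hf : IsColorMaximizer G f) : IsWeakMaximizer G f :=
  ⟨hf.1, fun g hg _ => hf.2 g hg⟩

lemma of_le {g : V → Fin k} (hf : IsColorMaximizer G f) (hg : Function.Surjective g)
    (hle : wienerColoring G f ≤ wienerColoring G g) : IsColorMaximizer G g :=
  ⟨hg, fun h hh => (hf.2 h hh).trans hle⟩

lemma card_mul_sumDist_le (hf : IsColorMaximizer G f) {i j : Fin k} (hij : i ≠ j) :
    #(colorClass f i) * sumDist G (colorClass f i) (colorClass f j) ≤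
      2 * wienerSet G (colorClass f i) + sumDist G (colorClass f i) (colorClass f j) := by
  rw [← sum_sum_dist_add_sum_dist, ← smul_eq_mul, ← Finset.sum_const]
  refine Finset.sum_le_sum fun x hx => ?_
  obtain rfl := mem_colorClass.mp hx
  have hle := hf.2 _ (mergeKeeping_surjective hf.1 x j)
  have heq := wienerColoring_mergeKeeping_add f x G hij
  omega

lemma card_colorClass_le_two (hf : IsColorMaximizer G f) (hG : G.Connected) {i j : Fin k}
    (hij : i ≠ j) (hi : 2 ≤ #(colorClass f i)) : #(colorClass f j) ≤ 2 := by
  have hle := (card_mul_wienerSet_add_sumDist_le hG _ _).trans (hf.card_mul_sumDist_le hij)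
  exact Nat.le_of_mul_le_mul_right (Nat.le_of_add_le_add_right hle) (wienerSet_pos hG hi)

lemma sumDist_le_of_card_eq_two (hf : IsColorMaximizer G f) {i j : Fin k} (hij : i ≠ j)
    (hi : #(colorClass f i) = 2) :
    sumDist G (colorClass f i) (colorClass f j) ≤ 2 * wienerSet G (colorClass f i) := by
  have hle := hf.card_mul_sumDist_le hij
  rw [hi] at hle
  omega

lemma not_strictFourPoint (hf : IsColorMaximizer G f) {i j : Fin k} (hij : i ≠ j)
    (hi : #(colorClass f i) = 2) (hj : #(colorClass f j) = 2) : ¬ StrictFourPoint G := by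
  intro hG
  have hlt := hG.wienerSet_add_lt_sumDist (disjoint_colorClass f hij) hi hj
  have hle_i := hf.sumDist_le_of_card_eq_two hij hi
  have hle_j := hf.sumDist_le_of_card_eq_two hij.symm hj
  rw [sumDist_comm] at hle_j
  omega

lemma card_le_add_two (hf : IsColorMaximizer G f) (hG : G.Connected) {i j : Fin k} (hij : i ≠ j)
    (hi : #(colorClass f i) = 2) (hj : #(colorClass f j) = 2) : Fintype.card V ≤ k + 2 := by
  by_contra! hV
  obtain ⟨l, hli, hlj, hl⟩ := exists_third_colorClass hi hj hV
  obtain ⟨x, rfl, hle⟩ := exists_wienerColoring_le_mergeKeeping hG hf.1 hij hj.ge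
  have hmerge := hf.of_le (mergeKeeping_surjective hf.1 x j) hle
  rw [← colorClass_mergeKeeping_of_ne f x hli hlj] at hl
  have hthree := card_colorClass_mergeKeeping_target f x hij
  have htwo := hmerge.card_colorClass_le_two hG hlj hl
  omega

lemma exists_card_colorClass_eq (hf : IsColorMaximizer G f) (hG : G.Connected)
    (hcase : StrictFourPoint G ∨ k + 2 < Fintype.card V) :
    ∃ i, #(colorClass f i) = Fintype.card V - (k - 1) := by
  have := hG.nonempty
  refine exists_card_colorClass_eq_of_forall_eq hf.1 fun i j hi hj => ?_
  by_contra hij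
  have hi₂ := (hf.card_colorClass_le_two hG (Ne.symm hij) hj).antisymm hi
  have hj₂ := (hf.card_colorClass_le_two hG hij hi).antisymm hj
  exact hcase.elim (hf.not_strictFourPoint hij hi₂ hj₂) (hf.card_le_add_two hG hij hi₂ hj₂).not_gt

end IsColorMaximizer

end ColorMaximizer

theorem cycle_max_iff_general {V : Type*} [Fintype V] [DecidableEq V] {k : ℕ} {G : SimpleGraph V}
    (hG : G.Connected) (hcase : StrictFourPoint G ∨ k + 2 < Fintype.card V)
    {f : V → Fin k} (hf : IsWeakMaximizer G f) :
    (∀ g : V → Fin k, IsWeakMaximizer G g → wienerColoring G g ≤ wienerColoring G f) ↔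
      ∃ i, #(colorClass f i) = Fintype.card V - (k - 1) := by
  obtain ⟨m, hm⟩ := exists_isColorMaximizer G hf.1
  constructor
  · intro hmax
    exact (hm.of_le hf.1 (hmax m hm.isWeakMaximizer)).exists_card_colorClass_eq hG hcase
  · rintro ⟨i, hi⟩ g hg
    obtain ⟨j, hj⟩ := hm.exists_card_colorClass_eq hG hcase
    have htype : colorType m = colorType f :=
      (colorType_eq_of_card_colorClass hm.1 hj).trans (colorType_eq_of_card_colorClass hf.1 hi).symm
    exact (hm.2 g hg.1).trans (hf.2 m hm.1 htype)

section Cycle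

variable {n : ℕ}

lemma exists_walk_add_natCast_length_le (u : ZMod n) (m : ℕ) :
    ∃ p : (cycleGraphZMod n).Walk u (u + m), p.length ≤ m := by
  induction m with
  | zero => exact ⟨Walk.nil.copy rfl (by simp), by simp⟩
  | succ m ih =>
    obtain ⟨p, hp⟩ := ih
    have hsucc : u + ((m + 1 : ℕ) : ZMod n) = u + m + 1 := by push_cast; ring
    by_cases hloop : u + m = u + m + 1
    · exact ⟨p.copy rfl (by rw [hsucc, ← hloop]), by rw [Walk.length_copy]; omega⟩
    · have hadj : (cycleGraphZMod n).Adj (u + m) (u + m + 1) := ⟨hloop, .inl rfl⟩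
      exact ⟨(p.concat hadj).copy rfl hsucc.symm, by
        rw [Walk.length_copy, Walk.length_concat]; omega⟩

lemma cycleGraphZMod_dist_add_intCast_le (u : ZMod n) (z : ℤ) :
    (cycleGraphZMod n).dist u (u + z) ≤ z.natAbs := by
  obtain ⟨m, rfl | rfl⟩ := z.eq_nat_or_neg
  · obtain ⟨p, hp⟩ := exists_walk_add_natCast_length_le u m
    simpa using (dist_le p).trans hp
  · obtain ⟨p, hp⟩ := exists_walk_add_natCast_length_le (u + -(m : ZMod n)) m
    simpa [SimpleGraph.dist_comm] using (dist_le p).trans hp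

variable [NeZero n]

variable (n) in
lemma cycleGraphZMod_connected : (cycleGraphZMod n).Connected where
  preconnected u v := by
    obtain ⟨p, -⟩ := exists_walk_add_natCast_length_le u (v - u).val
    simpa using p.reachable

lemma natAbs_valMinAbs_sub_le_one_of_adj {u v : ZMod n} (h : (cycleGraphZMod n).Adj u v) :
    (v - u).valMinAbs.natAbs ≤ 1 := by
  have hone : (1 : ZMod n).valMinAbs.natAbs ≤ 1 := by
    have hcast : ((1 : ZMod n).valMinAbs : ZMod n) = (1 : ℤ) := by
      rw [ZMod.coe_valMinAbs, Int.cast_one]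
    exact ZMod.natAbs_min_of_le_div_two n _ 1 hcast (ZMod.natAbs_valMinAbs_le 1)
  obtain rfl | rfl := h.2
  · simpa using hone
  · rw [← ZMod.natAbs_valMinAbs_neg]
    simpa using hone

lemma natAbs_valMinAbs_sub_le_length {u v : ZMod n} (p : (cycleGraphZMod n).Walk u v) :
    (v - u).valMinAbs.natAbs ≤ p.length := by
  induction p with
  | nil => simp
  | @cons u w v hadj p ih =>
    have htri := ZMod.natAbs_valMinAbs_add_le (v - w) (w - u)
    rw [sub_add_sub_cancel] at htri
    have hstep := natAbs_valMinAbs_sub_le_one_of_adj hadj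
    rw [Walk.length_cons]
    omega

lemma cycleGraphZMod_dist (u v : ZMod n) :
    (cycleGraphZMod n).dist u v = (v - u).valMinAbs.natAbs := by
  apply le_antisymm
  · simpa using cycleGraphZMod_dist_add_intCast_le u (v - u).valMinAbs
  · obtain ⟨p, hp⟩ := (cycleGraphZMod_connected n).exists_walk_length_eq_dist u v
    exact hp ▸ natAbs_valMinAbs_sub_le_length p

lemma valMinAbs_add_of_odd (hn : Odd n) {x y : ZMod n}
    (h : x.valMinAbs.natAbs + y.valMinAbs.natAbs = (x + y).valMinAbs.natAbs) :
    (x + y).valMinAbs = x.valMinAbs + y.valMinAbs := by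
  obtain ⟨m, rfl⟩ := hn
  have hle := ZMod.natAbs_valMinAbs_le (x + y)
  refine (ZMod.valMinAbs_spec _ _).mpr ⟨by simp, ?_⟩
  rw [Set.mem_Ioc]
  omega

lemma dist_lt_of_between_of_odd (hn : Odd n) {a b c d : ZMod n} (hac : a ≠ c) (had : a ≠ d)
    (hc : (cycleGraphZMod n).dist a c + (cycleGraphZMod n).dist c b = (cycleGraphZMod n).dist a b)
    (hd : (cycleGraphZMod n).dist a d + (cycleGraphZMod n).dist d b =
      (cycleGraphZMod n).dist a b) :
    (cycleGraphZMod n).dist c d < (cycleGraphZMod n).dist a b := by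
  simp only [cycleGraphZMod_dist] at hc hd ⊢
  have hc_add := valMinAbs_add_of_odd hn (x := c - a) (y := b - c) (by simpa using hc)
  have hd_add := valMinAbs_add_of_odd hn (x := d - a) (y := b - d) (by simpa using hd)
  rw [add_comm, sub_add_sub_cancel] at hc_add hd_add
  have hc_ne : (c - a).valMinAbs ≠ 0 := by simpa [sub_eq_zero] using hac.symm
  have hd_ne : (d - a).valMinAbs ≠ 0 := by simpa [sub_eq_zero] using had.symm
  have hcd : (d - c).valMinAbs.natAbs ≤ ((d - a).valMinAbs - (c - a).valMinAbs).natAbs :=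
    ZMod.natAbs_min_of_le_div_two n _ _ (by simp) (ZMod.natAbs_valMinAbs_le _)
  omega

lemma strictFourPoint_cycleGraphZMod (hn : Odd n) : StrictFourPoint (cycleGraphZMod n) :=
  strictFourPoint_of_dist_lt_of_between (cycleGraphZMod_connected n)
    fun _ _ _ _ => dist_lt_of_between_of_odd hn

end Cycle

/-- For `2 ≤ k ≤ n` with `n` odd or `n − k > 2`, and `f` a `k`-color weak maximizer of `W`
on `C_n`: `W(f)` is maximal among `k`-color weak maximizers iff `f` has a color class of
the largest possible size `n − (k − 1)`. -/
theorem cycle_max_iff (n k : ℕ) [NeZero n] (hk : 2 ≤ k) (hkn : k ≤ n)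
    (hcase : Odd n ∨ 2 < n - k)
    (f : ZMod n → Fin k) (hf : IsWeakMaximizer (cycleGraphZMod n) f) :
    (∀ g : ZMod n → Fin k, IsWeakMaximizer (cycleGraphZMod n) g →
        wienerColoring (cycleGraphZMod n) g ≤ wienerColoring (cycleGraphZMod n) f)
      ↔ ∃ i : Fin k, (colorClass f i).card = n - (k - 1) := by
  simpa only [ZMod.card] using cycle_max_iff_general (cycleGraphZMod_connected n)
    (hcase.imp strictFourPoint_cycleGraphZMod fun h => by rw [ZMod.card]; omega) hf
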